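/- Let n ≥ 1 be an integer. There exists a constant K > 0, depending only on n, with the following property. Let s ∈ (0,1), let f ∈ L²(Ω), let λ > I, let u be a weak solution of the fractional Laplacian problem and ũ a weak solution of the truncated nonlocal problem, both with the same data f. Assume C₁ > 0 is such that ‖v‖_{L²(Ω)} ≤ (1/C₁)·|||v||| for every test function v. Then |||u − ũ||| ≤ (K/(C₁·s·(λ−I)^{2s}))·‖u‖_{L²(Ω)}. -/

import Mathlib

open MeasureTheory Real Set

noncomputable section

abbrev Eucl (n : ℕ) := EuclideanSpace ℝ (Fin n)

/-- The normalizing constant `c_{n,s}` of the fractional Laplacian. -/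
def cns (n : ℕ) (s : ℝ) : ℝ :=
  s * (2 : ℝ) ^ (2 * s) * Real.Gamma ((n + 2) / 2) /
    (Real.Gamma (1 / 2) * Real.Gamma (1 - s))

/-- The interaction domain `Ω_I = {y ∈ ℝⁿ∖Ω : |y−x| < λ for some x ∈ Ω}`. -/
def interDom {n : ℕ} (Ω : Set (Eucl n)) (lam : ℝ) : Set (Eucl n) :=
  {y | y ∉ Ω ∧ ∃ x ∈ Ω, ‖y - x‖ < lam}

/-- The bilinear form `B_S(u,v) = ∬_S (u(y)−u(x))(v(y)−v(x))/|y−x|^{n+2s} dy dx`. -/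
def Bform {n : ℕ} (s : ℝ) (S : Set (Eucl n × Eucl n)) (u v : Eucl n → ℝ) : ℝ :=
  ∫ p in S, (u p.2 - u p.1) * (v p.2 - v p.1) / ‖p.2 - p.1‖ ^ ((n : ℝ) + 2 * s)

/-- `T = {(x,y) ∈ (Ω∪Ω_I)×(Ω∪Ω_I) : |y−x| < λ}`. -/
def Tset {n : ℕ} (Ω : Set (Eucl n)) (lam : ℝ) : Set (Eucl n × Eucl n) :=
  {p | p.1 ∈ Ω ∪ interDom Ω lam ∧ p.2 ∈ Ω ∪ interDom Ω lam ∧ ‖p.2 - p.1‖ < lam}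

/-- The energy seminorm `|||v||| = ((c_{n,s}/4)·B_T(v,v))^{1/2}`. -/
def energyNorm {n : ℕ} (s : ℝ) (Ω : Set (Eucl n)) (lam : ℝ) (v : Eucl n → ℝ) : ℝ :=
  Real.sqrt (cns n s / 4 * Bform s (Tset Ω lam) v v)

/-- The `H^s(D)` norm `(∫_D v² + B_{D×D}(v,v))^{1/2}`. -/
def HsNorm {n : ℕ} (s : ℝ) (D : Set (Eucl n)) (v : Eucl n → ℝ) : ℝ :=
  Real.sqrt ((∫ x in D, v x ^ 2) + Bform s (D ×ˢ D) v v)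

/-- The `L²(Ω)` norm. -/
def L2NormOn {n : ℕ} (Ω : Set (Eucl n)) (v : Eucl n → ℝ) : ℝ :=
  Real.sqrt (∫ x in Ω, v x ^ 2)

/-- The integrand of `B_S(u,v)`. -/
def gagIntegrand {n : ℕ} (s : ℝ) (u v : Eucl n → ℝ) : Eucl n × Eucl n → ℝ :=
  fun p => (u p.2 - u p.1) * (v p.2 - v p.1) / ‖p.2 - p.1‖ ^ ((n : ℝ) + 2 * s)

/-- A test function: measurable, square-integrable, vanishing a.e. off `Ω`,
with finite Gagliardo energy. -/
def IsTestFun {n : ℕ} (s : ℝ) (Ω : Set (Eucl n)) (v : Eucl n → ℝ) : Prop :=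
  Measurable v ∧ Integrable (fun x => v x ^ 2) ∧ (∀ᵐ x ∂volume, x ∉ Ω → v x = 0) ∧
    Integrable (fun p : Eucl n × Eucl n =>
      (v p.2 - v p.1) ^ 2 / ‖p.2 - p.1‖ ^ ((n : ℝ) + 2 * s))

/-- Weak solution of the fractional Laplacian problem with data `f`. -/
def IsFracSol {n : ℕ} (s : ℝ) (Ω : Set (Eucl n)) (f u : Eucl n → ℝ) : Prop :=
  IsTestFun s Ω u ∧ ∀ v, IsTestFun s Ω v →
    Integrable (gagIntegrand s u v) ∧
    cns n s / 2 * Bform s Set.univ u v = ∫ x in Ω, f x * v x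

/-- Weak solution of the truncated nonlocal problem with data `f`. -/
def IsTruncSol {n : ℕ} (s : ℝ) (Ω : Set (Eucl n)) (lam : ℝ) (f u : Eucl n → ℝ) : Prop :=
  IsTestFun s Ω u ∧ ∀ v, IsTestFun s Ω v →
    IntegrableOn (gagIntegrand s u v) (Tset Ω lam) ∧
    cns n s / 2 * Bform s (Tset Ω lam) u v = ∫ x in Ω, f x * v x

/-!
Put `w = u - ũ`. Both solutions have the same data, so testing with `w` gives
`B_{ℝⁿ×ℝⁿ}(u, w) = B_T(ũ, w)`. Functions vanishing off `Ω` only see the pairs meeting `Ω`, and such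
a pair lies in `T` exactly when its points are closer than `λ`; hence `B_T(w, w) = -B_F(u, w)`,
where `F` consists of the pairs at distance at least `λ`. On `F` the kernel is no longer singular:
its tail has mass `|∂B₁| / (2 s λ^{2s})`, so `(a - b)² ≤ 2a² + 2b²` and Fubini give
`B_F(v, v) ≤ 4 · mass · ‖v‖²`. Cauchy–Schwarz then bounds `|||w|||²` by a multiple of
`λ^{-2s} ‖u‖ ‖w‖`, and coercivity turns `‖w‖` into `|||w||| / C₁`. The factor `s` of `c_{n,s}`
cancels the one in the tail mass, which leaves a constant depending on `n` only.
-/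

lemma one_le_Gamma_of_mem_Ioc {x : ℝ} (hx : x ∈ Ioc (0 : ℝ) 1) : 1 ≤ Gamma x := by
  simpa only [Gamma_one] using
    Gamma_strictAntiOn_Ioc.antitoneOn hx (right_mem_Ioc.2 one_pos) hx.2

lemma le_of_sq_le_mul_self {x a : ℝ} (ha : 0 ≤ a) (h : x ^ 2 ≤ a * x) : x ≤ a := by
  by_contra! hlt
  nlinarith

lemma div_mul_rpow_le_div_mul_mul_sub_rpow {K C d s lam : ℝ} (hK : 0 ≤ K) (hC : 0 < C)
    (hs : s ∈ Ioo (0 : ℝ) 1) (hd : 0 ≤ d) (hlam : d < lam) :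
    K / (C * lam ^ (2 * s)) ≤ K / (C * s * (lam - d) ^ (2 * s)) := by
  have hs0 : 0 < s := hs.1
  have : 0 < (lam - d) ^ (2 * s) := rpow_pos_of_pos (sub_pos.2 hlam) _
  gcongr
  · exact mul_le_of_le_one_right hC.le hs.2.le
  · exact sub_le_self lam hd

lemma measureReal_ball_mul_Gamma {n : ℕ} (hn : 1 ≤ n) :
    volume.real (Metric.ball (0 : Eucl n) 1) * Gamma (((n : ℝ) + 2) / 2) = √π ^ n := by
  have : NeZero n := ⟨by omega⟩
  have hΓ : 0 < Gamma ((n : ℝ) / 2 + 1) := Gamma_pos_of_pos (by positivity)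
  rw [measureReal_def, EuclideanSpace.volume_ball, Fintype.card_fin, ENNReal.ofReal_one, one_pow,
    one_mul, ENNReal.toReal_ofReal (by positivity), add_div, div_self two_ne_zero]
  exact div_mul_cancel₀ _ hΓ.ne'

lemma abs_integral_mul_le_sqrt_mul_sqrt {α : Type*} [MeasurableSpace α] {μ : Measure α}
    {f g : α → ℝ} (hf : MemLp f 2 μ) (hg : MemLp g 2 μ) :
    |∫ x, f x * g x ∂μ| ≤ √(∫ x, f x ^ 2 ∂μ) * √(∫ x, g x ^ 2 ∂μ) := by
  have holder := integral_mul_norm_le_Lp_mul_Lq (μ := μ) (f := f) (g := g)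
    HolderConjugate.two_two (by simpa using hf) (by simpa using hg)
  calc |∫ x, f x * g x ∂μ| ≤ ∫ x, ‖f x‖ * ‖g x‖ ∂μ := by
        simpa only [norm_mul, norm_eq_abs] using
          norm_integral_le_integral_norm (μ := μ) fun x => f x * g x
    _ ≤ √(∫ x, f x ^ 2 ∂μ) * √(∫ x, g x ^ 2 ∂μ) := by
        simpa [sqrt_eq_rpow] using holder

lemma indicator_compl_ball_norm_rpow_neg {F : Type*} [SeminormedAddCommGroup F] (r R : ℝ) :
    (Metric.ball (0 : F) R)ᶜ.indicator (fun z => ‖z‖ ^ (-r)) =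
      fun z => (Ici R).indicator (fun t : ℝ => t ^ (-r)) ‖z‖ := by
  ext z
  by_cases hz : R ≤ ‖z‖ <;> simp [indicator, hz]

lemma pow_smul_indicator_Ici_rpow_neg {d : ℕ} (hd : 1 ≤ d) (r : ℝ) {R : ℝ} (hR : 0 < R) :
    (fun t : ℝ => t ^ (d - 1) • (Ici R).indicator (fun t : ℝ => t ^ (-r)) t) =
      (Ici R).indicator fun t : ℝ => t ^ ((d : ℝ) - 1 - r) := by
  ext t
  by_cases ht : t ∈ Ici R
  · have ht0 : 0 < t := hR.trans_le ht
    rw [indicator_of_mem ht, indicator_of_mem ht, smul_eq_mul, ← rpow_natCast, ← rpow_add ht0,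
      Nat.cast_sub hd, Nat.cast_one, sub_eq_add_neg _ r]
  · simp only [indicator_of_notMem ht, smul_zero]

section RadialTail

variable {E : Type*} [NormedAddCommGroup E] [NormedSpace ℝ E] [FiniteDimensional ℝ E]
  [Nontrivial E] [MeasurableSpace E] [BorelSpace E] (μ : Measure E) [μ.IsAddHaarMeasure]
  {r R : ℝ}

lemma integrableOn_compl_ball_norm_rpow_neg (hR : 0 < R) (hr : Module.finrank ℝ E < r) :
    IntegrableOn (fun z => ‖z‖ ^ (-r)) (Metric.ball (0 : E) R)ᶜ μ := by
  rw [← integrable_indicator_iff measurableSet_ball.compl,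
    indicator_compl_ball_norm_rpow_neg, integrable_fun_norm_addHaar,
    pow_smul_indicator_Ici_rpow_neg Module.finrank_pos r hR]
  refine Integrable.integrableOn ?_
  rw [integrable_indicator_iff measurableSet_Ici, integrableOn_Ici_iff_integrableOn_Ioi]
  exact integrableOn_Ioi_rpow_of_lt (by linarith) hR

lemma setIntegral_compl_ball_norm_rpow_neg (hR : 0 < R) (hr : Module.finrank ℝ E < r) :
    ∫ z in (Metric.ball (0 : E) R)ᶜ, ‖z‖ ^ (-r) ∂μ =
      Module.finrank ℝ E * μ.real (Metric.ball 0 1) *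
        (R ^ (Module.finrank ℝ E - r) / (r - Module.finrank ℝ E)) := by
  have hIci : Ioi 0 ∩ Ici R = Ici R := inter_eq_right.2 fun t ht => hR.trans_le ht
  have hexp : (Module.finrank ℝ E : ℝ) - 1 - r + 1 = Module.finrank ℝ E - r := by ring
  rw [← integral_indicator measurableSet_ball.compl,
    indicator_compl_ball_norm_rpow_neg, integral_fun_norm_addHaar,
    pow_smul_indicator_Ici_rpow_neg Module.finrank_pos r hR,
    setIntegral_indicator measurableSet_Ici, hIci, integral_Ici_eq_integral_Ioi,
    integral_Ioi_rpow_of_lt (by linarith) hR, hexp, nsmul_eq_mul, smul_eq_mul, mul_assoc, neg_div,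
    ← div_neg, neg_sub]

end RadialTail

section DifferenceForm

variable {G : Type*} [AddGroup G] [MeasurableSpace G] [MeasurableAdd₂ G] [MeasurableNeg G]
  {μ : Measure G} [SFinite μ] [μ.IsAddRightInvariant]

lemma integrable_mul_comp_sub {g k : G → ℝ} (hg : Integrable g μ) (hk : Integrable k μ) :
    Integrable (fun p : G × G => g p.2 * k (p.1 - p.2)) (μ.prod μ) :=
  hg.convolution_integrand (ContinuousLinearMap.mul ℝ ℝ) hk

lemma integral_mul_comp_sub {g k : G → ℝ} (hg : Integrable g μ) (hk : Integrable k μ) :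
    ∫ p : G × G, g p.2 * k (p.1 - p.2) ∂μ.prod μ = (∫ x, g x ∂μ) * ∫ z, k z ∂μ :=
  (integral_prod _ (integrable_mul_comp_sub hg hk)).trans <|
    integral_convolution (ContinuousLinearMap.mul ℝ ℝ) hg hk

lemma integral_sub_sq_mul_comp_sub_le [μ.IsNegInvariant] {u k : G → ℝ}
    (hu : Integrable (fun x => u x ^ 2) μ) (hk : Integrable k μ) (hk0 : 0 ≤ k) :
    ∫ p : G × G, (u p.2 - u p.1) ^ 2 * k (p.2 - p.1) ∂μ.prod μ ≤
      4 * (∫ x, u x ^ 2 ∂μ) * ∫ z, k z ∂μ := by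
  have int_fst : Integrable (fun p : G × G => u p.1 ^ 2 * k (p.2 - p.1)) (μ.prod μ) :=
    (integrable_mul_comp_sub hu hk).swap
  have int_snd : Integrable (fun p : G × G => u p.2 ^ 2 * k (p.2 - p.1)) (μ.prod μ) := by
    simpa only [neg_sub] using integrable_mul_comp_sub hu hk.comp_neg
  have eq_fst : ∫ p : G × G, u p.1 ^ 2 * k (p.2 - p.1) ∂μ.prod μ =
      (∫ x, u x ^ 2 ∂μ) * ∫ z, k z ∂μ :=
    (integral_prod_swap fun p : G × G => u p.2 ^ 2 * k (p.1 - p.2)).trans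
      (integral_mul_comp_sub hu hk)
  have eq_snd : ∫ p : G × G, u p.2 ^ 2 * k (p.2 - p.1) ∂μ.prod μ =
      (∫ x, u x ^ 2 ∂μ) * ∫ z, k z ∂μ := by
    simpa only [neg_sub, integral_neg_eq_self] using integral_mul_comp_sub hu hk.comp_neg
  calc ∫ p : G × G, (u p.2 - u p.1) ^ 2 * k (p.2 - p.1) ∂μ.prod μ
      ≤ ∫ p : G × G, 2 * (u p.2 ^ 2 * k (p.2 - p.1) + u p.1 ^ 2 * k (p.2 - p.1)) ∂μ.prod μ := by
        refine integral_mono_of_nonneg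
          (.of_forall fun p => mul_nonneg (sq_nonneg _) (hk0 _))
          ((int_snd.add int_fst).const_mul 2) (.of_forall fun p => ?_)
        have : 0 ≤ (u p.2 + u p.1) ^ 2 * k (p.2 - p.1) := mul_nonneg (sq_nonneg _) (hk0 _)
        dsimp only
        linarith
    _ = 4 * (∫ x, u x ^ 2 ∂μ) * ∫ z, k z ∂μ := by
        rw [integral_const_mul, integral_add int_snd int_fst, eq_fst, eq_snd]
        ring

end DifferenceForm

section Truncation

variable {n : ℕ} {s lam : ℝ} {Ω : Set (Eucl n)} {u v : Eucl n → ℝ}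

/-- The fractional difference quotient `(v(y) - v(x)) / |y - x|^{n/2 + s}` of `v`. Its `L²` norm on
`S` is `B_S(v,v)^{1/2}`, so that Gagliardo energies become `L²` quantities. -/
def fracDiffQuot (s : ℝ) (v : Eucl n → ℝ) (p : Eucl n × Eucl n) : ℝ :=
  (v p.2 - v p.1) / ‖p.2 - p.1‖ ^ (((n : ℝ) + 2 * s) / 2)

lemma fracDiffQuot_mul_fracDiffQuot (s : ℝ) (u v : Eucl n → ℝ) (p : Eucl n × Eucl n) :
    fracDiffQuot s u p * fracDiffQuot s v p = gagIntegrand s u v p := by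
  have hroot : (‖p.2 - p.1‖ ^ (((n : ℝ) + 2 * s) / 2)) ^ 2 = ‖p.2 - p.1‖ ^ ((n : ℝ) + 2 * s) := by
    rw [← rpow_mul_natCast (norm_nonneg _), Nat.cast_ofNat, div_mul_cancel₀ _ two_ne_zero]
  rw [fracDiffQuot, fracDiffQuot, gagIntegrand, div_mul_div_comm, ← sq, hroot]

lemma fracDiffQuot_sub (s : ℝ) (u v : Eucl n → ℝ) :
    fracDiffQuot s (u - v) = fracDiffQuot s u - fracDiffQuot s v := by
  ext p
  simp only [fracDiffQuot, Pi.sub_apply]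
  ring

lemma fracDiffQuot_eq_zero {p : Eucl n × Eucl n} (h₁ : u p.1 = 0) (h₂ : u p.2 = 0) :
    fracDiffQuot s u p = 0 := by
  simp only [fracDiffQuot, h₁, h₂, sub_self, zero_div]

lemma Bform_eq_setIntegral_fracDiffQuot (s : ℝ) (S : Set (Eucl n × Eucl n)) (u v : Eucl n → ℝ) :
    Bform s S u v = ∫ p in S, fracDiffQuot s u p * fracDiffQuot s v p := by
  simp only [fracDiffQuot_mul_fracDiffQuot, Bform, gagIntegrand]

lemma Bform_self_eq_setIntegral_sq (s : ℝ) (S : Set (Eucl n × Eucl n)) (v : Eucl n → ℝ) :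
    Bform s S v v = ∫ p in S, fracDiffQuot s v p ^ 2 := by
  simp only [Bform_eq_setIntegral_fracDiffQuot, sq]

lemma Bform_self_nonneg (s : ℝ) (S : Set (Eucl n × Eucl n)) (v : Eucl n → ℝ) :
    0 ≤ Bform s S v v := by
  rw [Bform_self_eq_setIntegral_sq]
  exact integral_nonneg fun p => sq_nonneg _

lemma isTestFun_iff :
    IsTestFun s Ω v ↔ Measurable v ∧ MemLp v 2 ∧ (∀ᵐ x, x ∉ Ω → v x = 0) ∧
      MemLp (fracDiffQuot s v) 2 := by
  refine and_congr_right fun hv => and_congr ?_ (and_congr_right fun _ => ?_)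
  · exact (memLp_two_iff_integrable_sq hv.aestronglyMeasurable).symm
  · have hq : Measurable (fracDiffQuot s v) := by
      unfold fracDiffQuot
      fun_prop
    rw [memLp_two_iff_integrable_sq hq.aestronglyMeasurable]
    simp only [sq, fracDiffQuot_mul_fracDiffQuot, gagIntegrand]

namespace IsTestFun

lemma memLp (hv : IsTestFun s Ω v) : MemLp v 2 := (isTestFun_iff.1 hv).2.1

lemma ae_eq_zero (hv : IsTestFun s Ω v) : ∀ᵐ x, x ∉ Ω → v x = 0 := hv.2.2.1

lemma memLp_fracDiffQuot (hv : IsTestFun s Ω v) : MemLp (fracDiffQuot s v) 2 :=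
  (isTestFun_iff.1 hv).2.2.2

lemma sub (hu : IsTestFun s Ω u) (hv : IsTestFun s Ω v) : IsTestFun s Ω (u - v) := by
  refine isTestFun_iff.2 ⟨hu.1.sub hv.1, hu.memLp.sub hv.memLp, ?_, ?_⟩
  · filter_upwards [hu.ae_eq_zero, hv.ae_eq_zero] with x hux hvx hx
    rw [Pi.sub_apply, hux hx, hvx hx, sub_zero]
  · rw [fracDiffQuot_sub]
    exact hu.memLp_fracDiffQuot.sub hv.memLp_fracDiffQuot

lemma integrable_fracDiffQuot_mul (hu : IsTestFun s Ω u) (hv : IsTestFun s Ω v) :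
    Integrable fun p => fracDiffQuot s u p * fracDiffQuot s v p :=
  hu.memLp_fracDiffQuot.integrable_mul hv.memLp_fracDiffQuot

lemma L2NormOn_eq_sqrt_integral (hv : IsTestFun s Ω v) : L2NormOn Ω v = √(∫ x, v x ^ 2) := by
  refine congrArg Real.sqrt (setIntegral_eq_integral_of_ae_compl_eq_zero ?_)
  filter_upwards [hv.ae_eq_zero] with x hx hxΩ
  rw [hx hxΩ, zero_pow two_ne_zero]

end IsTestFun

lemma Bform_sub_left {w : Eucl n → ℝ} (S : Set (Eucl n × Eucl n)) (hu : IsTestFun s Ω u)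
    (hv : IsTestFun s Ω v) (hw : IsTestFun s Ω w) :
    Bform s S (u - v) w = Bform s S u w - Bform s S v w := by
  simp only [Bform_eq_setIntegral_fracDiffQuot, fracDiffQuot_sub, Pi.sub_apply, sub_mul]
  exact integral_sub (hu.integrable_fracDiffQuot_mul hw).integrableOn
    (hv.integrable_fracDiffQuot_mul hw).integrableOn

lemma abs_Bform_le_sqrt_mul_sqrt (S : Set (Eucl n × Eucl n)) (hu : IsTestFun s Ω u)
    (hv : IsTestFun s Ω v) : |Bform s S u v| ≤ √(Bform s S u u) * √(Bform s S v v) := by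
  rw [Bform_self_eq_setIntegral_sq, Bform_self_eq_setIntegral_sq,
    Bform_eq_setIntegral_fracDiffQuot]
  exact abs_integral_mul_le_sqrt_mul_sqrt (hu.memLp_fracDiffQuot.restrict S)
    (hv.memLp_fracDiffQuot.restrict S)

/-- The pairs of points at distance at least `lam`, whose interaction the truncation discards. -/
def farPairs (n : ℕ) (lam : ℝ) : Set (Eucl n × Eucl n) :=
  {p | lam ≤ ‖p.2 - p.1‖}

lemma measurableSet_farPairs (n : ℕ) (lam : ℝ) : MeasurableSet (farPairs n lam) :=
  measurableSet_le measurable_const (by fun_prop)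

lemma Tset_subset_compl_farPairs (Ω : Set (Eucl n)) (lam : ℝ) :
    Tset Ω lam ⊆ (farPairs n lam)ᶜ :=
  fun _ hp => not_le.2 hp.2.2

lemma mem_Tset_of_mem_or_mem {p : Eucl n × Eucl n} (hΩ : p.1 ∈ Ω ∨ p.2 ∈ Ω)
    (hp : p ∉ farPairs n lam) : p ∈ Tset Ω lam := by
  have hlt : ‖p.2 - p.1‖ < lam := not_le.1 hp
  have mem_of_near {x y : Eucl n} (hx : x ∈ Ω) (hxy : ‖y - x‖ < lam) : y ∈ Ω ∪ interDom Ω lam :=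
    or_iff_not_imp_left.2 fun hy => ⟨hy, x, hx, hxy⟩
  rcases hΩ with h | h
  · exact ⟨.inl h, mem_of_near h hlt, hlt⟩
  · exact ⟨mem_of_near h (norm_sub_rev p.1 p.2 ▸ hlt), .inl h, hlt⟩

lemma Bform_Tset_eq_Bform_compl_farPairs (hu : ∀ᵐ x, x ∉ Ω → u x = 0) (s lam : ℝ)
    (v : Eucl n → ℝ) : Bform s (Tset Ω lam) u v = Bform s (farPairs n lam)ᶜ u v := by
  have hu_fst : ∀ᵐ p : Eucl n × Eucl n, p.1 ∉ Ω → u p.1 = 0 :=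
    Measure.quasiMeasurePreserving_fst.ae hu
  have hu_snd : ∀ᵐ p : Eucl n × Eucl n, p.2 ∉ Ω → u p.2 = 0 :=
    Measure.quasiMeasurePreserving_snd.ae hu
  simp only [Bform_eq_setIntegral_fracDiffQuot]
  refine (setIntegral_eq_of_subset_of_ae_sdiff_eq_zero
    (measurableSet_farPairs n lam).compl.nullMeasurableSet
    (Tset_subset_compl_farPairs Ω lam) ?_).symm
  filter_upwards [hu_fst, hu_snd] with p h₁ h₂ ⟨hnear, hT⟩
  have hout : p.1 ∉ Ω ∧ p.2 ∉ Ω :=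
    not_or.1 fun hΩ => hT (mem_Tset_of_mem_or_mem hΩ hnear)
  rw [fracDiffQuot_eq_zero (h₁ hout.1) (h₂ hout.2), zero_mul]

lemma Bform_univ_eq_Bform_Tset_add_Bform_farPairs (lam : ℝ) (hu : IsTestFun s Ω u)
    (hv : IsTestFun s Ω v) :
    Bform s univ u v = Bform s (Tset Ω lam) u v + Bform s (farPairs n lam) u v := by
  rw [Bform_Tset_eq_Bform_compl_farPairs hu.ae_eq_zero]
  simp only [Bform_eq_setIntegral_fracDiffQuot, setIntegral_univ]
  rw [add_comm]
  exact (integral_add_compl (measurableSet_farPairs n lam)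
    (hu.integrable_fracDiffQuot_mul hv)).symm

lemma cns_pos (n : ℕ) (hs : s ∈ Ioo (0 : ℝ) 1) : 0 < cns n s :=
  div_pos
    (mul_pos (mul_pos hs.1 (rpow_pos_of_pos two_pos _)) (Gamma_pos_of_pos (by positivity)))
    (mul_pos (Gamma_pos_of_pos one_half_pos) (Gamma_pos_of_pos (sub_pos.2 hs.2)))

lemma Bform_Tset_sub_self {f ut : Eucl n → ℝ} (hs : s ∈ Ioo (0 : ℝ) 1)
    (hu : IsFracSol s Ω f u) (hut : IsTruncSol s Ω lam f ut) :
    Bform s (Tset Ω lam) (u - ut) (u - ut) = -Bform s (farPairs n lam) u (u - ut) := by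
  have hw : IsTestFun s Ω (u - ut) := hu.1.sub hut.1
  have same_data : Bform s univ u (u - ut) = Bform s (Tset Ω lam) ut (u - ut) :=
    mul_left_cancel₀ (half_pos (cns_pos n hs)).ne' <| (hu.2 _ hw).2.trans (hut.2 _ hw).2.symm
  rw [Bform_sub_left _ hu.1 hut.1 hw, ← same_data,
    Bform_univ_eq_Bform_Tset_add_Bform_farPairs lam hu.1 hw, sub_add_cancel_left]

/-- The mass `∫_{|z| ≥ R} |z|^{-(n+2s)} dz` of the tail of the fractional kernel. -/
def kernelTail (n : ℕ) (s R : ℝ) : ℝ :=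
  ∫ z in (Metric.ball (0 : Eucl n) R)ᶜ, ‖z‖ ^ (-((n : ℝ) + 2 * s))

lemma kernelTail_eq (hn : 1 ≤ n) (hs : 0 < s) (hlam : 0 < lam) :
    kernelTail n s lam =
      n * volume.real (Metric.ball (0 : Eucl n) 1) / (2 * s * lam ^ (2 * s)) := by
  have : NeZero n := ⟨by omega⟩
  rw [kernelTail, setIntegral_compl_ball_norm_rpow_neg _ hlam
    (by rw [finrank_euclideanSpace_fin]; linarith), finrank_euclideanSpace_fin,
    sub_add_cancel_left, add_sub_cancel_left, rpow_neg hlam.le]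
  field_simp

lemma cns_mul_kernelTail_le (hn : 1 ≤ n) (hs : s ∈ Ioo (0 : ℝ) 1) (hlam : 0 < lam) :
    cns n s * kernelTail n s lam ≤ 2 * n * √π ^ (n - 1) / lam ^ (2 * s) := by
  have hs0 : 0 < s := hs.1
  have hΓ : 1 ≤ Gamma (1 - s) :=
    one_le_Gamma_of_mem_Ioc ⟨sub_pos.2 hs.2, sub_le_self 1 hs0.le⟩
  have hpow : (2 : ℝ) ^ (2 * s) ≤ 4 :=
    (rpow_le_rpow_of_exponent_le one_le_two (by linarith [hs.2])).trans_eq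
      (show (2 : ℝ) ^ (2 : ℝ) = 4 by norm_num)
  have hball := measureReal_ball_mul_Gamma hn
  rw [← pow_sub_one_mul (by omega : n ≠ 0) √π] at hball
  calc cns n s * kernelTail n s lam
      = (2 : ℝ) ^ (2 * s) / Gamma (1 - s) * (n * √π ^ (n - 1) / (2 * lam ^ (2 * s))) := by
        rw [kernelTail_eq hn hs0 hlam, cns, Gamma_one_half_eq]
        field_simp
        linear_combination hball
    _ ≤ 4 / 1 * (n * √π ^ (n - 1) / (2 * lam ^ (2 * s))) := by gcongr
    _ = 2 * n * √π ^ (n - 1) / lam ^ (2 * s) := by ring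

lemma Bform_farPairs_self_le (hn : 1 ≤ n) (hs : 0 < s) (hlam : 0 < lam) (hv : MemLp v 2) :
    Bform s (farPairs n lam) v v ≤ 4 * (∫ x, v x ^ 2) * kernelTail n s lam := by
  have : NeZero n := ⟨by omega⟩
  have hball : MeasurableSet (Metric.ball (0 : Eucl n) lam)ᶜ :=
    measurableSet_ball.compl
  set k : Eucl n → ℝ :=
    (Metric.ball 0 lam)ᶜ.indicator fun z => ‖z‖ ^ (-((n : ℝ) + 2 * s)) with hk
  have k_nonneg : 0 ≤ k := indicator_nonneg fun z _ => rpow_nonneg (norm_nonneg z) _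
  have k_integrable : Integrable k := (integrable_indicator_iff hball).2 <|
    integrableOn_compl_ball_norm_rpow_neg _ hlam (by rw [finrank_euclideanSpace_fin]; linarith)
  calc Bform s (farPairs n lam) v v
      = ∫ p : Eucl n × Eucl n, (v p.2 - v p.1) ^ 2 * k (p.2 - p.1) := by
        rw [Bform, ← integral_indicator (measurableSet_farPairs n lam)]
        refine integral_congr_ae (.of_forall fun p => ?_)
        by_cases hp : lam ≤ ‖p.2 - p.1‖ <;>
          simp [hk, farPairs, indicator, hp, sq, div_eq_mul_inv, rpow_neg (norm_nonneg _),
            -neg_add_rev]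
    _ ≤ 4 * (∫ x, v x ^ 2) * ∫ z, k z :=
        integral_sub_sq_mul_comp_sub_le hv.integrable_sq k_integrable k_nonneg
    _ = 4 * (∫ x, v x ^ 2) * kernelTail n s lam := by
        rw [hk, integral_indicator hball, kernelTail]

lemma abs_Bform_farPairs_le (hn : 1 ≤ n) (hs : 0 < s) (hlam : 0 < lam) (hu : IsTestFun s Ω u)
    (hv : IsTestFun s Ω v) :
    |Bform s (farPairs n lam) u v| ≤
      4 * kernelTail n s lam * (L2NormOn Ω u * L2NormOn Ω v) := by
  have tail_nonneg : 0 ≤ kernelTail n s lam := integral_nonneg fun z => by positivity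
  calc |Bform s (farPairs n lam) u v|
      ≤ √(Bform s (farPairs n lam) u u) * √(Bform s (farPairs n lam) v v) :=
        abs_Bform_le_sqrt_mul_sqrt _ hu hv
    _ ≤ √(4 * (∫ x, u x ^ 2) * kernelTail n s lam) *
          √(4 * (∫ x, v x ^ 2) * kernelTail n s lam) := by
        gcongr
        · exact Bform_farPairs_self_le hn hs hlam hu.memLp
        · exact Bform_farPairs_self_le hn hs hlam hv.memLp
    _ = 4 * kernelTail n s lam * (L2NormOn Ω u * L2NormOn Ω v) := by
        rw [hu.L2NormOn_eq_sqrt_integral, hv.L2NormOn_eq_sqrt_integral]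
        have sqrt_split (a : ℝ) :
            √(4 * a * kernelTail n s lam) = √(4 * kernelTail n s lam) * √a := by
          rw [mul_right_comm, sqrt_mul (by positivity)]
        rw [sqrt_split, sqrt_split, mul_mul_mul_comm, mul_self_sqrt (by positivity)]

lemma energyNorm_sq (Ω : Set (Eucl n)) (lam : ℝ) (hs : s ∈ Ioo (0 : ℝ) 1) (v : Eucl n → ℝ) :
    energyNorm s Ω lam v ^ 2 = cns n s / 4 * Bform s (Tset Ω lam) v v :=
  sq_sqrt (mul_nonneg (div_nonneg (cns_pos n hs).le zero_le_four) (Bform_self_nonneg _ _ _))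

theorem stmt0_general (hn : 1 ≤ n) (hs : s ∈ Ioo (0 : ℝ) 1) (hlam : 0 < lam)
    {f ut : Eucl n → ℝ} (hu : IsFracSol s Ω f u) (hut : IsTruncSol s Ω lam f ut)
    {C₁ : ℝ} (hC : 0 < C₁)
    (hcoercive : ∀ v, IsTestFun s Ω v → L2NormOn Ω v ≤ (1 / C₁) * energyNorm s Ω lam v) :
    energyNorm s Ω lam (u - ut) ≤
      2 * n * √π ^ (n - 1) / (C₁ * lam ^ (2 * s)) * L2NormOn Ω u := by
  set w := u - ut
  have hw : IsTestFun s Ω w := hu.1.sub hut.1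
  have hc : 0 < cns n s := cns_pos n hs
  have hu_nonneg : 0 ≤ L2NormOn Ω u := sqrt_nonneg _
  have hw_nonneg : 0 ≤ L2NormOn Ω w := sqrt_nonneg _
  refine le_of_sq_le_mul_self (by positivity) ?_
  calc energyNorm s Ω lam w ^ 2
      = cns n s / 4 * -Bform s (farPairs n lam) u w := by
        rw [energyNorm_sq Ω lam hs, Bform_Tset_sub_self hs hu hut]
    _ ≤ cns n s / 4 * (4 * kernelTail n s lam * (L2NormOn Ω u * L2NormOn Ω w)) := by
        gcongr
        exact (neg_le_abs _).trans (abs_Bform_farPairs_le hn hs.1 hlam hu.1 hw)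
    _ = cns n s * kernelTail n s lam * (L2NormOn Ω u * L2NormOn Ω w) := by ring
    _ ≤ 2 * n * √π ^ (n - 1) / lam ^ (2 * s) *
          (L2NormOn Ω u * (1 / C₁ * energyNorm s Ω lam w)) := by
        gcongr
        · exact cns_mul_kernelTail_le hn hs hlam
        · exact hcoercive w hw
    _ = 2 * n * √π ^ (n - 1) / (C₁ * lam ^ (2 * s)) * L2NormOn Ω u * energyNorm s Ω lam w := by
        field_simp

end Truncation

/-- For each dimension `n ≥ 1` there is a constant `K > 0`, depending
only on `n`, such that for any `s ∈ (0,1)`, `f ∈ L²(Ω)`, `λ > I = diam Ω`, weak solution `u`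
of the fractional Laplacian problem, weak solution `ũ` of the truncated nonlocal problem,
and any `C₁ > 0` with `‖v‖_{L²(Ω)} ≤ (1/C₁)·|||v|||` for all test functions `v`, one has
`|||u − ũ||| ≤ (K/(C₁·s·(λ−I)^{2s}))·‖u‖_{L²(Ω)}`. -/
theorem stmt0 (n : ℕ) (hn : 1 ≤ n) :
    ∃ K > (0 : ℝ), ∀ (s : ℝ), s ∈ Set.Ioo (0 : ℝ) 1 →
      ∀ (Ω : Set (Eucl n)), Ω.Nonempty → IsOpen Ω → Bornology.IsBounded Ω →
      ∀ (lam : ℝ), Metric.diam Ω < lam →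
      ∀ (f : Eucl n → ℝ), Measurable f → IntegrableOn (fun x => f x ^ 2) Ω →
      ∀ (u ut : Eucl n → ℝ),
        IsFracSol s Ω f u → IsTruncSol s Ω lam f ut →
      ∀ (C₁ : ℝ), 0 < C₁ →
        (∀ v, IsTestFun s Ω v → L2NormOn Ω v ≤ (1 / C₁) * energyNorm s Ω lam v) →
        energyNorm s Ω lam (u - ut) ≤
          K / (C₁ * s * (lam - Metric.diam Ω) ^ (2 * s)) * L2NormOn Ω u := by
  refine ⟨2 * n * √π ^ (n - 1), by positivity, ?_⟩
  intro s hs Ω _ _ _ lam hlam f _ _ u ut hu hut C₁ hC hcoercive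
  refine (stmt0_general hn hs (Metric.diam_nonneg.trans_lt hlam) hu hut hC hcoercive).trans ?_
  exact mul_le_mul_of_nonneg_right
    (div_mul_rpow_le_div_mul_mul_sub_rpow (by positivity) hC hs Metric.diam_nonneg hlam)
    (sqrt_nonneg _)
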